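/- Let n ≥ 3 be odd and let G be a unicyclic graph of order n. Then φ(G) = ⌊n/2⌋ + 2 if and only if G is isomorphic to U((n-3)/2, (n-3)/2). -/

import Mathlib

open SimpleGraph

/-- A dissociation set: a set of vertices inducing a subgraph of maximum degree at most 1,
i.e., every vertex of `S` has at most one neighbour inside `S`. -/
def IsDissoc {V : Type*} (G : SimpleGraph V) (S : Set V) : Prop :=
  ∀ v ∈ S, {u | u ∈ S ∧ G.Adj v u}.Subsingleton

/-- A maximal dissociation set: a dissociation set not properly contained in another one. -/
def IsMaxDissoc {V : Type*} (G : SimpleGraph V) (S : Set V) : Prop :=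
  IsDissoc G S ∧ ∀ T : Set V, IsDissoc G T → S ⊆ T → S = T

/-- `phi G` is the number of maximal dissociation sets of `G`. -/
noncomputable def phi {V : Type*} (G : SimpleGraph V) : ℕ :=
  {S : Set V | IsMaxDissoc G S}.ncard

/-- The number of maximal dissociation sets of `G` not containing `u`. -/
noncomputable def phiNot {V : Type*} (G : SimpleGraph V) (u : V) : ℕ :=
  {S : Set V | IsMaxDissoc G S ∧ u ∉ S}.ncard

/-- The number of maximal dissociation sets `S` of `G` with `u ∈ S` and
`u` of degree 0 in the subgraph induced by `S`. -/
noncomputable def phi0 {V : Type*} (G : SimpleGraph V) (u : V) : ℕ :=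
  {S : Set V | IsMaxDissoc G S ∧ u ∈ S ∧ ∀ x ∈ S, ¬ G.Adj u x}.ncard

/-- The number of maximal dissociation sets `S` of `G` with `u ∈ S` and
`u` of degree 1 in the subgraph induced by `S`. -/
noncomputable def phi1 {V : Type*} (G : SimpleGraph V) (u : V) : ℕ :=
  {S : Set V | IsMaxDissoc G S ∧ u ∈ S ∧ ∃! x, x ∈ S ∧ G.Adj u x}.ncard

/-- A unicyclic graph: a connected graph whose number of edges equals its number of vertices
(equivalently, a connected graph with exactly one cycle). -/
def IsUnicyclic {V : Type*} [Fintype V] (G : SimpleGraph V) : Prop :=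
  G.Connected ∧ G.edgeSet.ncard = Fintype.card V

/-- The tree `T(p,q)` (for `q ≤ p`): obtained from the star `K_{1,p}` by subdividing
exactly `q` of its edges.  The centre is `Sum.inl ()`, the `p` neighbours of the centre are
`Sum.inr (Sum.inl i)`, and for `j < q` the vertex `Sum.inr (Sum.inr j)` is the subdivision
pendant attached to the `j`-th neighbour.  It has `1 + p + q` vertices. -/
def treeT (p q : ℕ) (h : q ≤ p) : SimpleGraph (Unit ⊕ Fin p ⊕ Fin q) :=
  SimpleGraph.fromRel fun a b =>
    (∃ i : Fin p, a = Sum.inl () ∧ b = Sum.inr (Sum.inl i)) ∨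
    (∃ j : Fin q, a = Sum.inr (Sum.inl (Fin.castLE h j)) ∧ b = Sum.inr (Sum.inr j))

/-- The unicyclic graph `U(p,q)` (for `q ≤ p`): obtained by identifying one vertex of the
triangle `K₃` with the centre of `T(p,q)`.  The centre is `Sum.inl ()`, the two other triangle
vertices are `Sum.inr (Sum.inl 0)` and `Sum.inr (Sum.inl 1)`, and the copy of `T(p,q)` sits on
the remaining vertices.  It has `3 + p + q` vertices. -/
def graphU (p q : ℕ) (h : q ≤ p) : SimpleGraph (Unit ⊕ Fin 2 ⊕ Fin p ⊕ Fin q) :=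
  SimpleGraph.fromRel fun a b =>
    (a = Sum.inl () ∧ b = Sum.inr (Sum.inl 0)) ∨
    (a = Sum.inl () ∧ b = Sum.inr (Sum.inl 1)) ∨
    (a = Sum.inr (Sum.inl 0) ∧ b = Sum.inr (Sum.inl 1)) ∨
    (∃ i : Fin p, a = Sum.inl () ∧ b = Sum.inr (Sum.inr (Sum.inl i))) ∨
    (∃ j : Fin q, a = Sum.inr (Sum.inr (Sum.inl (Fin.castLE h j))) ∧
      b = Sum.inr (Sum.inr (Sum.inr j)))

/-- The unicyclic graph obtained from the cycle `C_r` by attaching one pendant vertex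
`Sum.inr j` to the cycle vertex `Sum.inl (f j)` for each `j : Fin t`.  For injective `f`
this is a member of the class `𝒰_{r,t}`. -/
def graphUrtF (r t : ℕ) (f : Fin t → Fin r) : SimpleGraph (Fin r ⊕ Fin t) :=
  SimpleGraph.fromRel fun a b =>
    (∃ i j : Fin r, a = Sum.inl i ∧ b = Sum.inl j ∧ (cycleGraph r).Adj i j) ∨
    (∃ j : Fin t, a = Sum.inl (f j) ∧ b = Sum.inr j)

/-- The canonical member `U_{r,t}` of `𝒰_{r,t}` (for `t ≤ r`): the cycle `C_r` with one
pendant vertex attached to each of its first `t` vertices. -/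
def graphUrt (r t : ℕ) (h : t ≤ r) : SimpleGraph (Fin r ⊕ Fin t) :=
  graphUrtF r t (Fin.castLE h)

/-- A caterpillar: a tree in which deleting all vertices of degree 1 leaves a path. -/
def IsCaterpillar {V : Type*} [Fintype V] (G : SimpleGraph V) : Prop :=
  G.IsTree ∧ ∃ m : ℕ,
    Nonempty ((G.induce {v | 2 ≤ (G.neighborSet v).ncard}) ≃g SimpleGraph.pathGraph m)

/-- The graph `G₁` obtained from `U` by adding `k` new pendant vertices
`v₁ = Sum.inr 0, …, v_k = Sum.inr (k-1)`, each adjacent to `w`. -/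
def addPendants {V : Type*} (U : SimpleGraph V) (w : V) (k : ℕ) : SimpleGraph (V ⊕ Fin k) :=
  SimpleGraph.fromRel fun a b =>
    (∃ x y, a = Sum.inl x ∧ b = Sum.inl y ∧ U.Adj x y) ∨
    (∃ j : Fin k, a = Sum.inl w ∧ b = Sum.inr j)

/-- The graph `G₂ = G₁ - w v_k + v₁ v_k`: obtained from `U` by attaching the pendant vertices
`v₁, …, v_{k-1}` to `w` and the vertex `v_k` to `v₁`. -/
def swapPendant {V : Type*} (U : SimpleGraph V) (w : V) (k : ℕ) : SimpleGraph (V ⊕ Fin k) :=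
  SimpleGraph.fromRel fun a b =>
    (∃ x y, a = Sum.inl x ∧ b = Sum.inl y ∧ U.Adj x y) ∨
    (∃ j : Fin k, j.val < k - 1 ∧ a = Sum.inl w ∧ b = Sum.inr j) ∨
    (∃ j₀ j₁ : Fin k, j₀.val = 0 ∧ j₁.val = k - 1 ∧ a = Sum.inr j₀ ∧ b = Sum.inr j₁)

/-- The graph obtained from `H` by attaching a pendant path of length 2 at `w`:
two new vertices `v = Sum.inr 0` and `u = Sum.inr 1` with edges `w v` and `v u`. -/
def addPath2 {V : Type*} (H : SimpleGraph V) (w : V) : SimpleGraph (V ⊕ Fin 2) :=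
  SimpleGraph.fromRel fun a b =>
    (∃ x y, a = Sum.inl x ∧ b = Sum.inl y ∧ H.Adj x y) ∨
    (a = Sum.inl w ∧ b = Sum.inr 0) ∨
    (a = Sum.inr 0 ∧ b = Sum.inr 1)

/-!
If a vertex has two pendant neighbours, delete one of them; if a pendant path `u, v, w` is attached
to the graph, delete `u` and `v`. In both cases the maximal dissociation sets of the smaller graph
extend injectively to `G`, and `G` has at least one more. A tree can be reduced in this way until
it is small, so a tree of order `n ≥ 3` has at least `⌈n/2⌉ + 1` maximal dissociation sets. A
unicyclic graph that cannot be reduced is a cycle with at most one pendant vertex at each cycle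
vertex, and deleting a cycle vertex together with its pendant neighbour leaves a tree. Hence
`phi G ≥ ⌊n/2⌋ + 2` for unicyclic `G`.

For odd `n ≥ 5`, equality excludes everything but pendant paths, and the smaller graph is extremal
again. All these paths hang at one vertex `c` of a final triangle, since a path attached elsewhere
would produce a second additional set. So `G - c` has a perfect matching, counting edges gives
`2 deg c = n + 1`, and exactly one matched pair consists of two neighbours of `c`: this is
`U((n-3)/2, (n-3)/2)`. Conversely, a maximal dissociation set of that graph either is the
complement of `c` or contains `c` and is determined by the unique neighbour of `c` in it, so there
are at most `deg c + 1` of them.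
-/

section DissociationSets

variable {V W : Type*} {G : SimpleGraph V} {H : SimpleGraph W}

lemma IsDissoc.mono {S T : Set V} (hT : IsDissoc G T) (h : S ⊆ T) : IsDissoc G S :=
  fun v hv _ hx _ hy => hT v (h hv) ⟨h hx.1, hx.2⟩ ⟨h hy.1, hy.2⟩

lemma not_isDissoc {S : Set V} {v x y : V} (hv : v ∈ S) (hx : x ∈ S) (hy : y ∈ S) (hxy : x ≠ y)
    (hvx : G.Adj v x) (hvy : G.Adj v y) : ¬ IsDissoc G S :=
  fun h => hxy (h v hv ⟨hx, hvx⟩ ⟨hy, hvy⟩)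

lemma isDissoc_pair (a b : V) : IsDissoc G {a, b} := by
  rintro v (rfl | rfl) x ⟨rfl | rfl, h1⟩ y ⟨rfl | rfl, h2⟩ <;> simp_all

lemma IsDissoc.union {S T : Set V} (hS : IsDissoc G S) (hT : IsDissoc G T)
    (hST : ∀ s ∈ S, ∀ t ∈ T, ¬ G.Adj s t) : IsDissoc G (S ∪ T) := by
  rintro v (hv | hv) x ⟨hx, hvx⟩ y ⟨hy, hvy⟩
  · exact hS v hv ⟨hx.resolve_right fun h => hST v hv x h hvx, hvx⟩
      ⟨hy.resolve_right fun h => hST v hv y h hvy, hvy⟩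
  · exact hT v hv ⟨hx.resolve_left fun h => hST x h v hv hvx.symm, hvx⟩
      ⟨hy.resolve_left fun h => hST y h v hv hvy.symm, hvy⟩

lemma IsDissoc.insert_of_isolated {S : Set V} {z s : V} (hS : IsDissoc G S)
    (hz : ∀ t ∈ S, G.Adj z t → t = s) (hs : ∀ t ∈ S, ¬ G.Adj s t) :
    IsDissoc G (insert z S) := by
  have hnbr : ∀ x ∈ insert z S, G.Adj z x → x = s := by
    rintro x (rfl | hx) hzx
    exacts [absurd hzx G.irrefl, hz x hx hzx]
  rintro v (rfl | hv) x ⟨hx, hvx⟩ y ⟨hy, hvy⟩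
  · rw [hnbr x hx hvx, hnbr y hy hvy]
  rcases hx with rfl | hx <;> rcases hy with rfl | hy
  · rfl
  · exact absurd (hz v hv hvx.symm ▸ hvy) (hs y hy)
  · exact absurd (hz v hv hvy.symm ▸ hvx) (hs x hx)
  · exact hS v hv ⟨hx, hvx⟩ ⟨hy, hvy⟩

lemma IsDissoc.preimage (f : H ↪g G) {S : Set V} (hS : IsDissoc G S) :
    IsDissoc H (f ⁻¹' S) := by
  intro v hv x hx y hy
  exact f.injective (hS (f v) hv ⟨hx.1, f.map_adj_iff.2 hx.2⟩ ⟨hy.1, f.map_adj_iff.2 hy.2⟩)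

lemma IsDissoc.image (f : H ↪g G) {S : Set W} (hS : IsDissoc H S) : IsDissoc G (f '' S) := by
  rintro _ ⟨v, hv, rfl⟩ _ ⟨⟨x, hx, rfl⟩, hvx⟩ _ ⟨⟨y, hy, rfl⟩, hvy⟩
  rw [hS v hv ⟨hx, f.map_adj_iff.1 hvx⟩ ⟨hy, f.map_adj_iff.1 hvy⟩]

lemma IsDissoc.exists_isMaxDissoc [Finite V] {T : Set V} (hT : IsDissoc G T) :
    ∃ S, IsMaxDissoc G S ∧ T ⊆ S := by
  obtain ⟨S, hTS, hS⟩ := (Set.toFinite {S : Set V | IsDissoc G S}).exists_le_maximal hT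
  exact ⟨S, ⟨hS.prop, fun R hR hSR => hS.eq_of_le hR hSR⟩, hTS⟩

lemma IsMaxDissoc.mem {S : Set V} {z : V} (hS : IsMaxDissoc G S) (hz : IsDissoc G (insert z S)) :
    z ∈ S := by
  rw [hS.2 _ hz (Set.subset_insert z S)]
  exact Set.mem_insert z S

end DissociationSets

section Counting

variable {V W : Type*} {G : SimpleGraph V} {H : SimpleGraph W}

/- Extending every maximal dissociation set of `H`, together with `T`, to one of `G` injects the
former into the maximal dissociation sets of `G` that contain `T` and have a maximal trace. -/
lemma phi_add_ncard_le [Finite V] (f : H ↪g G) {T : Set V} (hT : IsDissoc G T)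
    (hTf : ∀ t ∈ T, ∀ x, ¬ G.Adj t (f x)) {A : Set (Set V)}
    (hA : ∀ R ∈ A, IsMaxDissoc G R ∧ (T ⊆ R → ¬ IsMaxDissoc H (f ⁻¹' R))) :
    phi H + A.ncard ≤ phi G := by
  have hext : ∀ S, IsMaxDissoc H S → ∃ R, IsMaxDissoc G R ∧ T ⊆ R ∧ f ⁻¹' R = S := by
    intro S hS
    obtain ⟨R, hR, hsub⟩ := (hT.union (hS.1.image f) (by
      rintro t ht _ ⟨x, -, rfl⟩
      exact hTf t ht x)).exists_isMaxDissoc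
    obtain ⟨hTR, hSR⟩ := Set.union_subset_iff.1 hsub
    exact ⟨R, hR, hTR, (hS.2 _ (hR.1.preimage f) (Set.image_subset_iff.1 hSR)).symm⟩
  choose! g hg using hext
  have hinj : Set.InjOn g {S | IsMaxDissoc H S} := fun S hS S' hS' h => by
    rw [← (hg S hS).2.2, ← (hg S' hS').2.2, h]
  have hdisj : Disjoint (g '' {S | IsMaxDissoc H S}) A := by
    rw [Set.disjoint_left]
    rintro _ ⟨S, hS, rfl⟩ hR
    obtain ⟨-, hTR, htrace⟩ := hg S hS
    exact (hA _ hR).2 hTR (htrace.symm ▸ hS)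
  unfold phi
  rw [← hinj.ncard_image, ← Set.ncard_union_eq hdisj (Set.toFinite _) (Set.toFinite _)]
  refine Set.ncard_le_ncard ?_ (Set.toFinite _)
  rintro R (⟨S, hS, rfl⟩ | hR)
  exacts [(hg S hS).1, (hA R hR).1]

lemma phi_le_of_embedding [Finite V] (f : H ↪g G) : phi H ≤ phi G := by
  simpa using phi_add_ncard_le f (T := ∅) (A := ∅) (fun _ h => h.elim) (by simp) (by simp)

lemma phi_congr [Finite V] (e : H ≃g G) : phi H = phi G :=
  have : Finite W := .of_equiv V e.symm.toEquiv
  (phi_le_of_embedding e.toEmbedding).antisymm (phi_le_of_embedding e.symm.toEmbedding)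

lemma phi_induce_compl_singleton_add_ncard_le [Finite V] (p : V) {A : Set (Set V)}
    (hA : ∀ R ∈ A, IsMaxDissoc G R ∧ ∃ z ∉ R, z ≠ p ∧ IsDissoc G (insert z (R \ {p}))) :
    phi (G.induce {p}ᶜ) + A.ncard ≤ phi G := by
  refine phi_add_ncard_le (Embedding.induce {p}ᶜ) (T := ∅) (fun _ h => h.elim) (by simp)
    fun R hR => ?_
  obtain ⟨hRmax, z, hzR, hzp, hz⟩ := hA R hR
  refine ⟨hRmax, fun _ htrace => hzR ?_⟩
  refine htrace.mem (z := ⟨z, hzp⟩) ((hz.preimage (Embedding.induce {p}ᶜ)).mono ?_)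
  rintro x (rfl | hx)
  exacts [.inl rfl, .inr ⟨hx, x.2⟩]

lemma card_le_phi [Finite V] {ι : Type*} (F : ι → Set V) (hF : ∀ i, IsDissoc G (F i))
    (hincomp : Pairwise fun i j => ¬ IsDissoc G (F i ∪ F j)) : Nat.card ι ≤ phi G := by
  choose S hS hFS using fun i => (hF i).exists_isMaxDissoc
  have hinj : Function.Injective S := by
    intro i j h
    by_contra hij
    exact hincomp hij ((hS i).1.mono (Set.union_subset (hFS i) (h ▸ hFS j)))
  rw [← Set.ncard_univ, ← Set.ncard_image_of_injective _ hinj]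
  exact Set.ncard_le_ncard (by rintro _ ⟨i, -, rfl⟩; exact hS i) (Set.toFinite _)

lemma IsDissoc.mem_edge_of_adj {S : Set V} {e : Sym2 V} {x y : V} (hS : IsDissoc G S)
    (he : e ∈ G.edgeSet) (heS : ∀ z ∈ e, z ∈ S) (hx : x ∈ e) (hy : y ∈ S) (hxy : G.Adj x y) :
    y ∈ e := by
  obtain ⟨z, rfl⟩ := hx
  rw [hS x (heS x (Sym2.mem_mk_left x z)) ⟨hy, hxy⟩ ⟨heS z (Sym2.mem_mk_right x z), he⟩]
  exact Sym2.mem_mk_right x z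

/- Two edges contained in a common dissociation set are neither incident nor joined by an edge. -/
lemma ncard_edgeSet_le_phi [Finite V]
    (h : ∀ e ∈ G.edgeSet, ∀ e' ∈ G.edgeSet, ∃ x ∈ e, ∃ y ∈ e', x = y ∨ G.Adj x y) :
    G.edgeSet.ncard ≤ phi G := by
  rw [← Nat.card_coe_set_eq]
  refine card_le_phi (fun e : G.edgeSet => {x | x ∈ e.1}) ?_ fun e e' hne hS => hne ?_
  · rintro ⟨⟨a, b⟩, -⟩
    exact (isDissoc_pair a b).mono fun x hx => Sym2.mem_iff.1 hx
  · obtain ⟨x, hx, y, hy, hxy⟩ := h e e.2 e' e'.2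
    have hye : y ∈ e.1 := by
      rcases hxy with rfl | hxy
      exacts [hx, hS.mem_edge_of_adj e.2 (fun _ => .inl) hx (.inr hy) hxy]
    obtain ⟨z, hz⟩ := hy
    have hyz : G.Adj y z := by
      rw [← mem_edgeSet, ← hz]
      exact e'.2
    have hze : z ∈ e.1 :=
      hS.mem_edge_of_adj e.2 (fun _ => .inl) hye (.inr (hz ▸ Sym2.mem_mk_right y z)) hyz
    exact Subtype.ext (((Sym2.mem_and_mem_iff hyz.ne).1 ⟨hye, hze⟩).trans hz.symm)

end Counting

section Connectivity

variable {V W : Type*} {G : SimpleGraph V} {H : SimpleGraph W}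

lemma mem_of_connected (hG : G.Connected) {A : Set V} {a : V} (ha : a ∈ A)
    (hA : ∀ x ∈ A, ∀ y, G.Adj x y → y ∈ A) (x : V) : x ∈ A := by
  obtain ⟨w⟩ := hG.preconnected a x
  induction w with
  | nil => exact ha
  | cons h _ ih => exact ih (hA _ ha _ h)

lemma connected_induce_of_retraction (hG : G.Connected) {s : Set V} (r : V → s)
    (hr : ∀ x : s, (r x : V) = x) (hadj : ∀ x y, G.Adj x y → r x = r y ∨ G.Adj (r x) (r y)) :
    (G.induce s).Connected := by
  obtain ⟨a⟩ := hG.nonempty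
  have hreach : ∀ x, (G.induce s).Reachable (r a) (r x) :=
    mem_of_connected hG (A := {x | (G.induce s).Reachable (r a) (r x)}) .rfl fun x hx y hxy => by
      rcases hadj x y hxy with h | h
      · rwa [Set.mem_ofPred_eq, ← h]
      · exact hx.trans (Adj.reachable h)
  refine connected_iff_exists_forall_reachable _ |>.2 ⟨r a, fun y => ?_⟩
  have hry : r y = y := Subtype.ext (hr y)
  exact hry ▸ hreach y

lemma connected_of_dominating (hH : H.Connected) (f : H →g G)
    (hf : ∀ v, v ∈ Set.range f ∨ ∃ x, G.Adj v (f x)) : G.Connected := by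
  obtain ⟨x₀⟩ := hH.nonempty
  have hreach : ∀ v, ∃ x, G.Reachable v (f x) := by
    intro v
    rcases hf v with ⟨x, rfl⟩ | ⟨x, hx⟩
    exacts [⟨x, .rfl⟩, ⟨x, hx.reachable⟩]
  refine connected_iff_exists_forall_reachable _ |>.2 ⟨f x₀, fun v => ?_⟩
  obtain ⟨x, hx⟩ := hreach v
  exact ((hH.preconnected x₀ x).map f).trans hx.symm

lemma ncard_edgeSet_induce_compl_add [Finite V] (G : SimpleGraph V) (t : Set V) :
    (G.induce tᶜ).edgeSet.ncard + {e ∈ G.edgeSet | ∃ x ∈ e, x ∈ t}.ncard = G.edgeSet.ncard := by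
  have himage : Sym2.map Subtype.val '' (G.induce tᶜ).edgeSet =
      G.edgeSet \ {e ∈ G.edgeSet | ∃ x ∈ e, x ∈ t} := by
    ext e
    constructor
    · rintro ⟨⟨a, b⟩, hab, rfl⟩
      refine ⟨hab, ?_⟩
      rintro ⟨-, x, hx, hxt⟩
      rcases Sym2.mem_iff.1 hx with rfl | rfl
      exacts [a.2 hxt, b.2 hxt]
    · induction e with | _ a b
      rintro ⟨hab, ht⟩
      have hmem : ∀ x ∈ s(a, b), x ∉ t := fun x hx hxt => ht ⟨hab, x, hx, hxt⟩
      exact ⟨s(⟨a, hmem a (Sym2.mem_mk_left a b)⟩, ⟨b, hmem b (Sym2.mem_mk_right a b)⟩), hab, rfl⟩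
  rw [← Set.ncard_image_of_injective _ (Sym2.map.injective Subtype.val_injective), himage,
    Set.ncard_sdiff_add_ncard_of_subset (Set.sep_subset _ _) (Set.toFinite _)]

lemma ncard_incidenceSet (v : V) : (G.incidenceSet v).ncard = (G.neighborSet v).ncard := by
  classical
  rw [← Nat.card_coe_set_eq, Nat.card_congr (G.incidenceSetEquivNeighborSet v),
    Nat.card_coe_set_eq]

lemma card_compl_add_ncard [Finite V] (t : Set V) :
    Nat.card (tᶜ : Set V) + t.ncard = Nat.card V := by
  rw [Nat.card_coe_set_eq, add_comm, Set.ncard_add_ncard_compl]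

lemma card_le_two_of_closed_pair [Finite V] (hG : G.Connected) {a b : V}
    (ha : ∀ z, G.Adj a z → z = b) (hb : ∀ z, G.Adj b z → z = a) : Nat.card V ≤ 2 := by
  have huniv : Set.univ ⊆ ({a, b} : Set V) := fun x _ => mem_of_connected hG (.inl rfl) (by
    rintro x (rfl | rfl) y hxy
    exacts [.inr (ha y hxy), .inl (hb y hxy)]) x
  calc Nat.card V = (Set.univ : Set V).ncard := (Set.ncard_univ V).symm
    _ ≤ ({a, b} : Set V).ncard := Set.ncard_le_ncard huniv
    _ ≤ ({b} : Set V).ncard + 1 := Set.ncard_insert_le a {b}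
    _ = 2 := by rw [Set.ncard_singleton]

lemma exists_adj_adj_of_connected [Finite V] (hG : G.Connected) (hn : 3 ≤ Nat.card V) :
    ∃ a b c, a ≠ c ∧ G.Adj b a ∧ G.Adj b c := by
  by_contra! h
  have hsub : ∀ v x y, G.Adj v x → G.Adj v y → x = y := fun v x y hx hy => by
    by_contra hxy
    exact h x v y hxy hx hy
  have : Nontrivial V := Finite.one_lt_card_iff_nontrivial.1 (by omega)
  obtain ⟨a⟩ := hG.nonempty
  obtain ⟨b, hab⟩ := hG.preconnected.exists_adj_of_nontrivial a
  have := card_le_two_of_closed_pair hG (fun z hz => hsub a z b hz hab)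
    fun z hz => hsub b z a hz hab.symm
  omega

lemma three_le_phi [Finite V] (hG : G.Connected) (hn : 3 ≤ Nat.card V) : 3 ≤ phi G := by
  obtain ⟨a, b, c, hac, hba, hbc⟩ := exists_adj_adj_of_connected hG hn
  have habc : ∀ S : Set V, a ∈ S → b ∈ S → c ∈ S → ¬ IsDissoc G S := fun S ha hb hc =>
    not_isDissoc hb ha hc hac hba hbc
  have := card_le_phi (G := G) ![{a, b}, {b, c}, {a, c}] (by
    intro i
    fin_cases i <;> exact isDissoc_pair _ _) (by
    intro i j hij
    fin_cases i <;> fin_cases j <;>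
      first | exact absurd rfl hij | exact habc _ (by simp) (by simp) (by simp))
  simpa using this

end Connectivity

section Pendants

variable {V : Type*} {G : SimpleGraph V}

/-- `p` is a vertex of degree 1 whose neighbour is `y`. -/
def IsPendantAt (G : SimpleGraph V) (p y : V) : Prop := ∀ z, G.Adj p z ↔ z = y

/-- The vertices of degree 1; deleting them leaves the core of the graph. -/
def pendants (G : SimpleGraph V) : Set V := {p | ∃ y, IsPendantAt G p y}

/-- `u, v, w` is a path whose end `u` has degree 1 and whose midpoint `v` has degree 2. -/
structure IsPendantPath (G : SimpleGraph V) (u v w : V) : Prop where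
  isPendantAt : IsPendantAt G u v
  adj_iff : ∀ z, G.Adj v z ↔ z = u ∨ z = w
  ne : u ≠ w

lemma IsPendantAt.adj {p y : V} (h : IsPendantAt G p y) : G.Adj p y := (h y).2 rfl

lemma isPendantAt_of_mem_pendants {p v : V} (hp : p ∈ pendants G) (hvp : G.Adj v p) :
    IsPendantAt G p v := by
  obtain ⟨y, hy⟩ := hp
  rwa [(hy v).1 hvp.symm]

lemma IsPendantAt.notMem_pendants [Finite V] {p y : V} (hp : IsPendantAt G p y)
    (hG : G.Connected) (hn : 3 ≤ Nat.card V) : y ∉ pendants G := by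
  intro hy
  have hyp := isPendantAt_of_mem_pendants hy hp.adj
  have := card_le_two_of_closed_pair hG (fun z => (hp z).1) fun z => (hyp z).1
  omega

lemma IsPendantAt.ncard_edgeSet_induce_compl_add [Finite V] {u v : V} (h : IsPendantAt G u v) :
    (G.induce {u, v}ᶜ).edgeSet.ncard + (G.neighborSet v).ncard = G.edgeSet.ncard := by
  have hinc : {e ∈ G.edgeSet | ∃ x ∈ e, x ∈ ({u, v} : Set V)} = G.incidenceSet v := by
    ext e
    constructor
    · rintro ⟨he, x, hx, rfl | rfl⟩
      · obtain ⟨z, rfl⟩ := hx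
        exact ⟨he, (h z).1 he ▸ Sym2.mem_mk_right x z⟩
      · exact ⟨he, hx⟩
    · rintro ⟨he, hv⟩
      exact ⟨he, v, hv, .inr rfl⟩
  rw [← ncard_incidenceSet, ← hinc, _root_.ncard_edgeSet_induce_compl_add]

lemma IsPendantAt.card_compl_add_two [Finite V] {u v : V} (h : IsPendantAt G u v) :
    Nat.card ({u, v}ᶜ : Set V) + 2 = Nat.card V := by
  rw [← Set.ncard_pair h.adj.ne, card_compl_add_ncard]

lemma connected_induce_compl_of_subset_pendants [Finite V] (hG : G.Connected)
    (hn : 3 ≤ Nat.card V) {t : Set V} (ht : t ⊆ pendants G) : (G.induce tᶜ).Connected := by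
  classical
  choose y hy using fun p : pendants G => p.2
  have hyt : ∀ p, y p ∉ t := fun p h => (hy p).notMem_pendants hG hn (ht h)
  refine connected_induce_of_retraction hG
    (fun x => if hx : x ∈ t then ⟨y ⟨x, ht hx⟩, hyt _⟩ else ⟨x, hx⟩) (fun x => ?_) fun a b hab => ?_
  · rw [dif_neg x.2]
  · by_cases ha : a ∈ t
    · obtain rfl := (hy ⟨a, ht ha⟩ b).1 hab
      left
      simp [ha, hyt]
    · by_cases hb : b ∈ t
      · obtain rfl := (hy ⟨b, ht hb⟩ a).1 hab.symm
        left
        simp [hb, hyt]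
      · right
        simpa [ha, hb] using hab

lemma ncard_edgeSet_induce_compl_add_of_subset_pendants [Finite V] (hG : G.Connected)
    (hn : 3 ≤ Nat.card V) {t : Set V} (ht : t ⊆ pendants G) :
    (G.induce tᶜ).edgeSet.ncard + t.ncard = G.edgeSet.ncard := by
  choose! y hy using fun p (hp : p ∈ t) => ht hp
  have hinj : Set.InjOn (fun p => s(p, y p)) t := fun p hp q hq hpq => by
    rcases Sym2.eq_iff.1 hpq with ⟨h, -⟩ | ⟨h, -⟩
    exacts [h, absurd (ht (h ▸ hp)) ((hy q hq).notMem_pendants hG hn)]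
  have himage : (fun p => s(p, y p)) '' t = {e ∈ G.edgeSet | ∃ x ∈ e, x ∈ t} := by
    ext e
    constructor
    · rintro ⟨p, hp, rfl⟩
      exact ⟨(hy p hp).adj, p, Sym2.mem_mk_left p _, hp⟩
    · rintro ⟨he, p, ⟨z, rfl⟩, hp⟩
      exact ⟨p, hp, congrArg (s(p, ·)) ((hy p hp z).1 he).symm⟩
  rw [← hinj.ncard_image, himage, ncard_edgeSet_induce_compl_add]

lemma IsPendantPath.connected_induce_compl {u v w : V} (h : IsPendantPath G u v w)
    (hG : G.Connected) : (G.induce {u, v}ᶜ).Connected := by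
  classical
  have hwv : w ≠ v := ((h.adj_iff w).2 (.inr rfl)).ne'
  have hw : w ∈ ({u, v}ᶜ : Set V) := by simp [h.ne.symm, hwv]
  have hout : ∀ a b, a ∈ ({u, v} : Set V) → G.Adj a b → b ∈ ({u, v, w} : Set V) := by
    rintro a b (rfl | rfl) hab
    · simp [(h.isPendantAt b).1 hab]
    · rcases (h.adj_iff b).1 hab with rfl | rfl <;> simp
  refine connected_induce_of_retraction hG
    (fun x => if hx : x ∈ ({u, v} : Set V) then ⟨w, hw⟩ else ⟨x, hx⟩) (fun x => ?_)
    fun a b hab => ?_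
  · rw [dif_neg x.2]
  · by_cases ha : a ∈ ({u, v} : Set V)
    · rcases hout a b ha hab with rfl | rfl | rfl <;> left <;> simp_all
    · by_cases hb : b ∈ ({u, v} : Set V)
      · rcases hout b a hb hab.symm with rfl | rfl | rfl <;> left <;> simp_all
      · right
        rwa [dif_neg ha, dif_neg hb]

lemma IsPendantPath.ncard_neighborSet {u v w : V} (h : IsPendantPath G u v w) :
    (G.neighborSet v).ncard = 2 := by
  rw [show G.neighborSet v = {u, w} from Set.ext h.adj_iff, Set.ncard_pair h.ne]

lemma exists_twins_or_isPendantPath [Finite V] (hG : G.Connected) (hn : 3 ≤ Nat.card V) {v : V}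
    (hv : v ∉ pendants G) (hcore : {z | G.Adj v z ∧ z ∉ pendants G}.Subsingleton) :
    (∃ p q, p ≠ q ∧ IsPendantAt G p v ∧ IsPendantAt G q v) ∨ ∃ u w, IsPendantPath G u v w := by
  by_cases htwins : {p | IsPendantAt G p v}.Subsingleton
  swap
  · obtain ⟨p, hp, q, hq, hpq⟩ := Set.not_subsingleton_iff.1 htwins
    exact .inl ⟨p, q, hpq, hp, hq⟩
  have : Nontrivial V := Finite.one_lt_card_iff_nontrivial.1 (by omega)
  obtain ⟨x, hvx⟩ := hG.preconnected.exists_adj_of_nontrivial v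
  obtain ⟨y, hvy, hxy⟩ : ∃ y, G.Adj v y ∧ y ≠ x := by
    by_contra! hx
    exact hv ⟨x, fun z => ⟨hx z, fun hz => hz ▸ hvx⟩⟩
  have hpath : ∀ u w, G.Adj v u → G.Adj v w → u ∈ pendants G → w ∉ pendants G →
      IsPendantPath G u v w := fun u w hvu hvw hu hw =>
    { isPendantAt := isPendantAt_of_mem_pendants hu hvu
      adj_iff := fun z => by
        refine ⟨fun hvz => ?_, by rintro (rfl | rfl) <;> assumption⟩
        by_cases hz : z ∈ pendants G
        · exact .inl (htwins (isPendantAt_of_mem_pendants hz hvz)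
            (isPendantAt_of_mem_pendants hu hvu))
        · exact .inr (hcore ⟨hvz, hz⟩ ⟨hvw, hw⟩)
      ne := fun huw => hw (huw ▸ hu) }
  by_cases hx : x ∈ pendants G <;> by_cases hy : y ∈ pendants G
  · exact absurd
      (htwins (isPendantAt_of_mem_pendants hy hvy) (isPendantAt_of_mem_pendants hx hvx)) hxy
  · exact .inr ⟨x, y, hpath x y hvx hvy hx hy⟩
  · exact .inr ⟨y, x, hpath y x hvy hvx hy hx⟩
  · exact absurd (hcore ⟨hvy, hy⟩ ⟨hvx, hx⟩) hxy

lemma sum_ncard_neighborSet [Fintype V] :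
    ∑ v, (G.neighborSet v).ncard = 2 * G.edgeSet.ncard := by
  classical
  rw [← coe_edgeFinset, Set.ncard_coe_finset, ← sum_degrees_eq_twice_card_edges]
  exact Finset.sum_congr rfl fun v _ => Set.ncard_eq_toFinset_card' (G.neighborSet v)

lemma card_le_ncard_edgeSet [Finite V] (h : ∀ v, 2 ≤ (G.neighborSet v).ncard) :
    Nat.card V ≤ G.edgeSet.ncard := by
  have := Fintype.ofFinite V
  have hsum := Finset.card_nsmul_le_sum Finset.univ _ 2 fun v _ => h v
  rw [sum_ncard_neighborSet, Finset.card_univ, ← Nat.card_eq_fintype_card, smul_eq_mul] at hsum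
  omega

lemma ncard_neighborSet_eq_two [Finite V] (h : ∀ v, 2 ≤ (G.neighborSet v).ncard)
    (hE : G.edgeSet.ncard ≤ Nat.card V) (v : V) : (G.neighborSet v).ncard = 2 := by
  have := Fintype.ofFinite V
  have hsum : ∑ v : V, 2 = ∑ v, (G.neighborSet v).ncard := by
    refine (Finset.sum_le_sum fun v _ => h v).antisymm ?_
    rw [sum_ncard_neighborSet, Finset.sum_const, Finset.card_univ, ← Nat.card_eq_fintype_card,
      smul_eq_mul]
    omega
  exact ((Finset.sum_eq_sum_iff_of_le fun v _ => h v).1 hsum v (Finset.mem_univ v)).symm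

lemma exists_reduction [Finite V] (hG : G.Connected) (hn : 3 ≤ Nat.card V) :
    (∃ p q y, p ≠ q ∧ IsPendantAt G p y ∧ IsPendantAt G q y) ∨
      (∃ u v w, IsPendantPath G u v w) ∨
      ∀ v, 2 ≤ ((G.induce (pendants G)ᶜ).neighborSet v).ncard := by
  by_cases hcore : ∀ v, 2 ≤ ((G.induce (pendants G)ᶜ).neighborSet v).ncard
  · exact .inr (.inr hcore)
  push Not at hcore
  obtain ⟨v, hv⟩ := hcore
  have hsub := Set.ncard_le_one_iff_subsingleton.1 (Nat.le_of_lt_succ hv)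
  rcases exists_twins_or_isPendantPath hG hn v.2 fun x hx y hy =>
      congrArg Subtype.val (@hsub ⟨x, hx.2⟩ hx.1 ⟨y, hy.2⟩ hy.1) with
    ⟨p, q, htwins⟩ | ⟨u, w, hpath⟩
  exacts [.inl ⟨p, q, v, htwins⟩, .inr (.inl ⟨u, v, w, hpath⟩)]

end Pendants

section TreeBound

variable {V : Type*} {G : SimpleGraph V}

lemma isTree_iff_connected_and_ncard [Finite V] :
    G.IsTree ↔ G.Connected ∧ G.edgeSet.ncard + 1 = Nat.card V :=
  isTree_iff_connected_and_card

/- A maximal dissociation set containing a pendant vertex `p` and its neighbour has a trace on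
`G - p` to which the other pendant vertex can be added. -/
lemma phi_induce_compl_add_one_le_of_twins [Finite V] {p q y : V} (hpq : p ≠ q)
    (hp : IsPendantAt G p y) (hq : IsPendantAt G q y) : phi (G.induce {p}ᶜ) + 1 ≤ phi G := by
  obtain ⟨R, hR, hpyR⟩ := (isDissoc_pair (G := G) p y).exists_isMaxDissoc
  obtain ⟨hpR, hyR⟩ := Set.pair_subset_iff.1 hpyR
  have hqR : q ∉ R := fun h => not_isDissoc hyR hpR h hpq hp.adj.symm hq.adj.symm hR.1
  have hdissoc : IsDissoc G (insert q (R \ {p})) :=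
    (hR.1.mono Set.sdiff_subset).insert_of_isolated (fun t _ => (hq t).1) fun t ht hyt =>
      ht.2 (hR.1 y hyR ⟨ht.1, hyt⟩ ⟨hpR, hp.adj.symm⟩)
  simpa using phi_induce_compl_singleton_add_ncard_le p (A := {R}) (by
    rintro _ rfl
    exact ⟨hR, q, hqR, hpq.symm, hdissoc⟩)

lemma IsPendantAt.phi_add_ncard_le [Finite V] {u v : V} (h : IsPendantAt G u v) {A : Set (Set V)}
    (hA : ∀ R ∈ A, IsMaxDissoc G R ∧
      (u ∈ R → ¬ IsMaxDissoc (G.induce {u, v}ᶜ) (Subtype.val ⁻¹' R))) :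
    phi (G.induce {u, v}ᶜ) + A.ncard ≤ phi G := by
  refine _root_.phi_add_ncard_le (Embedding.induce {u, v}ᶜ) (T := {u})
    ((isDissoc_pair u u).mono (by simp)) ?_
    fun R hR => ⟨(hA R hR).1, fun hu => (hA R hR).2 (hu rfl)⟩
  rintro _ rfl ⟨x, hx⟩ hux
  exact hx (.inr ((h x).1 hux))

lemma IsPendantAt.exists_isMaxDissoc_notMem [Finite V] {u v x : V} (h : IsPendantAt G u v)
    (hvx : G.Adj v x) (hxu : x ≠ u) : ∃ R, IsMaxDissoc G R ∧ v ∈ R ∧ x ∈ R ∧ u ∉ R := by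
  obtain ⟨R, hR, hvxR⟩ := (isDissoc_pair (G := G) v x).exists_isMaxDissoc
  obtain ⟨hvR, hxR⟩ := Set.pair_subset_iff.1 hvxR
  exact ⟨R, hR, hvR, hxR, fun huR => not_isDissoc hvR hxR huR hxu hvx h.adj.symm hR.1⟩

lemma IsPendantAt.phi_add_ncard_neighborSet_le [Finite V] {u v : V} (h : IsPendantAt G u v) :
    phi (G.induce {u, v}ᶜ) + (G.neighborSet v).ncard ≤ phi G + 1 := by
  choose! R hR hvR hxR huR using
    fun x (hx : x ∈ G.neighborSet v \ {u}) => h.exists_isMaxDissoc_notMem hx.1 hx.2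
  have hinj : Set.InjOn R (G.neighborSet v \ {u}) := fun x hx y hy hxy =>
    (hR x hx).1 v (hvR x hx) ⟨hxR x hx, hx.1⟩ ⟨hxy ▸ hxR y hy, hy.1⟩
  have hgain := h.phi_add_ncard_le (A := R '' (G.neighborSet v \ {u})) (by
    rintro _ ⟨x, hx, rfl⟩
    exact ⟨hR x hx, fun hu => absurd hu (huR x hx)⟩)
  rw [hinj.ncard_image] at hgain
  have := Set.ncard_sdiff_singleton_add_one (s := G.neighborSet v) h.adj.symm
  omega

lemma IsPendantPath.phi_add_one_le [Finite V] {u v w : V} (h : IsPendantPath G u v w) :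
    phi (G.induce {u, v}ᶜ) + 1 ≤ phi G := by
  have := h.isPendantAt.phi_add_ncard_neighborSet_le
  rw [h.ncard_neighborSet] at this
  omega

theorem le_phi_of_isTree [Finite V] (hG : G.IsTree) (hn : 3 ≤ Nat.card V) :
    (Nat.card V + 1) / 2 + 1 ≤ phi G := by
  induction h : Nat.card V using Nat.strong_induction_on generalizing V with
  | _ n ih =>
    obtain ⟨hconn, hE⟩ := isTree_iff_connected_and_ncard.1 hG
    by_cases hn4 : n ≤ 4
    · have := three_le_phi hconn hn
      omega
    rcases exists_reduction hconn hn with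
      ⟨p, q, y, hpq, hp, hq⟩ | ⟨u, v, w, hpath⟩ | hcore
    · have hsub : {p} ⊆ pendants G := Set.singleton_subset_iff.2 ⟨y, hp⟩
      have hcard := card_compl_add_ncard {p}
      have hedges := ncard_edgeSet_induce_compl_add_of_subset_pendants hconn hn hsub
      rw [Set.ncard_singleton] at hcard hedges
      have hphi := phi_induce_compl_add_one_le_of_twins hpq hp hq
      have := ih _ (by omega) (isTree_iff_connected_and_ncard.2
        ⟨connected_induce_compl_of_subset_pendants hconn hn hsub, by omega⟩) (by omega) rfl
      omega
    · have hcard := hpath.isPendantAt.card_compl_add_two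
      have hedges := hpath.isPendantAt.ncard_edgeSet_induce_compl_add
      rw [hpath.ncard_neighborSet] at hedges
      have hphi := hpath.phi_add_one_le
      have := ih _ (by omega) (isTree_iff_connected_and_ncard.2
        ⟨hpath.connected_induce_compl hconn, by omega⟩) (by omega) rfl
      omega
    · have hcard := card_compl_add_ncard (pendants G)
      have hedges := ncard_edgeSet_induce_compl_add_of_subset_pendants hconn hn subset_rfl
      have := card_le_ncard_edgeSet hcore
      omega

end TreeBound

section Cycles

variable {V : Type*} {G : SimpleGraph V}

lemma cycleGraph_adj_iff_val {n : ℕ} (hn : 3 ≤ n) (i j : Fin n) :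
    (cycleGraph n).Adj i j ↔ i.val + 1 = j.val ∨ j.val + 1 = i.val ∨
      (i.val = 0 ∧ j.val + 1 = n) ∨ (j.val = 0 ∧ i.val + 1 = n) := by
  rw [cycleGraph_adj']
  rcases lt_trichotomy i j with h | rfl | h
  · rw [Fin.coe_sub_iff_lt.2 h, Fin.coe_sub_iff_le.2 h.le]
    omega
  · rw [Fin.coe_sub_iff_le.2 le_rfl]
    omega
  · rw [Fin.coe_sub_iff_le.2 h.le, Fin.coe_sub_iff_lt.2 h]
    omega

lemma ncard_neighborSet_cycleGraph {n : ℕ} (i : Fin (n + 3)) :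
    ((cycleGraph (n + 3)).neighborSet i).ncard = 2 := by
  rw [Set.ncard_eq_toFinset_card', ← cycleGraph_degree_three_le (v := i)]
  rfl

lemma exists_iso_cycleGraph [Finite V] (hG : G.Connected)
    (hreg : ∀ v, (G.neighborSet v).ncard = 2) : ∃ n, Nonempty (cycleGraph (n + 3) ≃g G) := by
  have hcyc : ¬ G.IsAcyclic := fun hac => by
    have := (isTree_iff_connected_and_ncard.1 ⟨hG, hac⟩).2
    have := card_le_ncard_edgeSet fun v => (hreg v).ge
    omega
  rw [isAcyclic_iff_free_cycleGraph] at hcyc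
  push Not at hcyc
  obtain ⟨n, hn, hfree⟩ := hcyc
  obtain ⟨n, rfl⟩ := Nat.exists_eq_add_of_le' hn
  obtain ⟨⟨f, hf⟩⟩ := hfree
  have hnbr : ∀ i, f '' (cycleGraph (n + 3)).neighborSet i = G.neighborSet (f i) := fun i => by
    refine Set.eq_of_subset_of_ncard_le ?_ ?_ (Set.toFinite _)
    · rintro _ ⟨j, hij, rfl⟩
      exact f.map_adj hij
    · rw [Set.ncard_image_of_injective _ hf, hreg, ncard_neighborSet_cycleGraph]
  have hsurj : Function.Surjective f := mem_of_connected hG (A := Set.range f) ⟨0, rfl⟩ (by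
    rintro _ ⟨i, rfl⟩ y hy
    obtain ⟨j, -, rfl⟩ := (hnbr i).ge hy
    exact ⟨j, rfl⟩)
  refine ⟨n, ⟨Equiv.ofBijective f ⟨hf, hsurj⟩, fun {i j} => ⟨fun hij => ?_, f.map_adj⟩⟩⟩
  obtain ⟨k, hik, hkj⟩ := (hnbr i).ge hij
  exact hf hkj ▸ hik

lemma exists_iso_apply_eq_of_two_regular [Finite V] (hG : G.Connected)
    (hreg : ∀ v, (G.neighborSet v).ncard = 2) (a b : V) : ∃ e : G ≃g G, e a = b := by
  obtain ⟨n, ⟨e⟩⟩ := exists_iso_cycleGraph hG hreg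
  let rotation : cycleGraph (n + 3) ≃g cycleGraph (n + 3) :=
    { Equiv.addRight (e.symm b - e.symm a) with
      map_rel_iff' := by simp [cycleGraph_adj] }
  refine ⟨e.symm.trans (rotation.trans e), ?_⟩
  change e (e.symm a + (e.symm b - e.symm a)) = b
  rw [add_sub_cancel, e.apply_symm_apply]

lemma connected_induce_compl_singleton_of_two_regular [Finite V] (hG : G.Connected)
    (hreg : ∀ v, (G.neighborSet v).ncard = 2) (v : V) : (G.induce {v}ᶜ).Connected := by
  have : Nontrivial V := by
    obtain ⟨a, b, hab, -⟩ := Set.ncard_eq_two.1 (hreg v)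
    exact ⟨a, b, hab⟩
  obtain ⟨x, hx⟩ := hG.exists_connected_induce_compl_singleton_of_finite_nontrivial
  obtain ⟨e, rfl⟩ := exists_iso_apply_eq_of_two_regular hG hreg x v
  refine connected_of_dominating hx
    (induceHom e.toHom (t := {e x}ᶜ) fun y hy => e.injective.ne hy) fun y => .inl ?_
  exact ⟨⟨e.symm y, fun h => y.2 (e.symm_apply_eq.1 h)⟩, Subtype.ext (e.apply_symm_apply y)⟩

lemma ncard_edgeSet_of_two_regular [Finite V] (hreg : ∀ v, (G.neighborSet v).ncard = 2) :
    G.edgeSet.ncard = Nat.card V := by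
  have := Fintype.ofFinite V
  have hsum := sum_ncard_neighborSet (G := G)
  simp only [hreg, Finset.sum_const, Finset.card_univ, ← Nat.card_eq_fintype_card,
    smul_eq_mul] at hsum
  omega

lemma ncard_edgeSet_le_phi_of_card_le_four [Finite V] (hG : G.Connected) (hn : Nat.card V ≤ 4) :
    G.edgeSet.ncard ≤ phi G := by
  refine ncard_edgeSet_le_phi fun e he e' he' => ?_
  by_contra! h
  have hsub : ∀ x ∈ e, ∀ y, G.Adj x y → y ∈ e := by
    intro x hx y hxy
    by_contra hy
    have hye' : y ∉ e' := fun hye' => (h x hx y hye').2 hxy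
    induction e with | _ a b
    induction e' with | _ c d
    simp only [Sym2.mem_iff, not_or, forall_eq_or_imp, forall_eq] at h hy hye'
    have hab : a ≠ b := G.ne_of_adj he
    have hcd : c ≠ d := G.ne_of_adj he'
    have hnodup : [y, a, b, c, d].Nodup := by
      simp only [List.nodup_cons, List.mem_cons, List.not_mem_nil, List.nodup_nil]
      tauto
    have := Fintype.ofFinite V
    have hcard : 5 ≤ Fintype.card V := hnodup.length_le_card
    rw [← Nat.card_eq_fintype_card] at hcard
    omega
  obtain ⟨a, b⟩ := e
  obtain ⟨c, d⟩ := e'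
  exact (h c (mem_of_connected hG (Sym2.mem_mk_left a b) hsub c) c (Sym2.mem_mk_left c d)).1 rfl

section

variable {n : ℕ}

lemma exists_isMaxDissoc_one_notMem (hn : 6 ≤ n) : ∃ R, IsMaxDissoc (cycleGraph n) R ∧
    ⟨1, by omega⟩ ∉ R ∧ ∃ z ∉ R, z ≠ ⟨0, by omega⟩ ∧
      IsDissoc (cycleGraph n) (insert z (R \ {⟨0, by omega⟩})) := by
  have hadj := cycleGraph_adj_iff_val (n := n) (by omega)
  have hT : IsDissoc (cycleGraph n) {i | i.val = 0 ∨ i.val = 2 ∨ i.val = 4} := by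
    rintro v hv x ⟨hx, hvx⟩ y ⟨hy, hvy⟩
    rw [Set.mem_ofPred_eq] at hv hx hy
    rw [hadj] at hvx hvy
    omega
  obtain ⟨R, hR, hTR⟩ := hT.exists_isMaxDissoc
  have h0 : (⟨0, by omega⟩ : Fin n) ∈ R := hTR (by simp)
  have h2 : (⟨2, by omega⟩ : Fin n) ∈ R := hTR (by simp)
  have h4 : (⟨4, by omega⟩ : Fin n) ∈ R := hTR (by simp)
  have h1 : (⟨1, by omega⟩ : Fin n) ∉ R := fun h1 =>
    not_isDissoc h1 h0 h2 (by simp) (by simp [hadj]) (by simp [hadj]) hR.1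
  have h3 : (⟨3, by omega⟩ : Fin n) ∉ R := fun h3 =>
    not_isDissoc h3 h2 h4 (by simp) (by simp [hadj]) (by simp [hadj]) hR.1
  refine ⟨R, hR, h1, _, h1, by simp, (hR.1.mono Set.sdiff_subset).insert_of_isolated
    (s := ⟨2, by omega⟩) ?_ ?_⟩
  · rintro ⟨t, ht⟩ ⟨-, ht0⟩ h
    simp only [hadj, Set.mem_singleton_iff, Fin.mk.injEq] at h ht0 ⊢
    omega
  · rintro ⟨t, ht⟩ ⟨htR, -⟩ h
    simp only [hadj] at h
    obtain rfl | rfl : t = 1 ∨ t = 3 := by omega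
    exacts [h1 htR, h3 htR]

lemma exists_isMaxDissoc_one_mem (hn : 7 ≤ n) : ∃ R, IsMaxDissoc (cycleGraph n) R ∧
    ⟨1, by omega⟩ ∈ R ∧ ∃ z ∉ R, z ≠ ⟨0, by omega⟩ ∧
      IsDissoc (cycleGraph n) (insert z (R \ {⟨0, by omega⟩})) := by
  have hadj := cycleGraph_adj_iff_val (n := n) (by omega)
  have hT : IsDissoc (cycleGraph n) {i | i.val = 0 ∨ i.val = 1 ∨ i.val = 4 ∨ i.val = 5} := by
    rintro v hv x ⟨hx, hvx⟩ y ⟨hy, hvy⟩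
    rw [Set.mem_ofPred_eq] at hv hx hy
    rw [hadj] at hvx hvy
    omega
  obtain ⟨R, hR, hTR⟩ := hT.exists_isMaxDissoc
  have h0 : (⟨0, by omega⟩ : Fin n) ∈ R := hTR (by simp)
  have h1 : (⟨1, by omega⟩ : Fin n) ∈ R := hTR (by simp)
  have h4 : (⟨4, by omega⟩ : Fin n) ∈ R := hTR (by simp)
  have h5 : (⟨5, by omega⟩ : Fin n) ∈ R := hTR (by simp)
  have h2 : (⟨2, by omega⟩ : Fin n) ∉ R := fun h2 =>
    not_isDissoc h1 h0 h2 (by simp) (by simp [hadj]) (by simp [hadj]) hR.1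
  have h3 : (⟨3, by omega⟩ : Fin n) ∉ R := fun h3 =>
    not_isDissoc h4 h3 h5 (by simp) (by simp [hadj]) (by simp [hadj]) hR.1
  refine ⟨R, hR, h1, _, h2, by simp, (hR.1.mono Set.sdiff_subset).insert_of_isolated
    (s := ⟨1, by omega⟩) ?_ ?_⟩
  · rintro ⟨t, ht⟩ ⟨htR, -⟩ h
    simp only [hadj] at h
    obtain rfl | rfl : t = 1 ∨ t = 3 := by omega
    exacts [rfl, absurd htR h3]
  · rintro ⟨t, ht⟩ ⟨htR, ht0⟩ h
    simp only [hadj] at h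
    obtain rfl | rfl : t = 0 ∨ t = 2 := by omega
    exacts [ht0 rfl, h2 htR]

end

lemma five_le_phi_cycleGraph_five : 5 ≤ phi (cycleGraph 5) := by
  have hclose : ∀ a b c d : Fin 5, (cycleGraph 5).Adj a b → (cycleGraph 5).Adj c d →
      ((a = c ∨ (cycleGraph 5).Adj a c) ∨ (a = d ∨ (cycleGraph 5).Adj a d)) ∨
        (b = c ∨ (cycleGraph 5).Adj b c) ∨ (b = d ∨ (cycleGraph 5).Adj b d) := by
    decide
  calc 5 = (cycleGraph 5).edgeSet.ncard := by
        rw [ncard_edgeSet_of_two_regular (ncard_neighborSet_cycleGraph (n := 2)), Nat.card_fin]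
    _ ≤ phi (cycleGraph 5) := ncard_edgeSet_le_phi <| by
        rintro ⟨a, b⟩ hab ⟨c, d⟩ hcd
        simpa only [Sym2.mem_iff, exists_eq_or_imp, exists_eq_left] using hclose a b c d hab hcd

lemma ncard_edgeSet_induce_compl_singleton_add [Finite V] (v : V) :
    (G.induce {v}ᶜ).edgeSet.ncard + (G.neighborSet v).ncard = G.edgeSet.ncard := by
  have hinc : {e ∈ G.edgeSet | ∃ x ∈ e, x ∈ ({v} : Set V)} = G.incidenceSet v := by
    ext e
    simp [incidenceSet]
  rw [← ncard_incidenceSet, ← hinc, ncard_edgeSet_induce_compl_add]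

lemma isTree_induce_compl_singleton_of_two_regular [Finite V] (hG : G.Connected)
    (hreg : ∀ v, (G.neighborSet v).ncard = 2) (v : V) : (G.induce {v}ᶜ).IsTree := by
  refine isTree_iff_connected_and_ncard.2
    ⟨connected_induce_compl_singleton_of_two_regular hG hreg v, ?_⟩
  have hcard := card_compl_add_ncard {v}
  have hedges := ncard_edgeSet_induce_compl_singleton_add (G := G) v
  rw [Set.ncard_singleton] at hcard
  rw [hreg, ncard_edgeSet_of_two_regular hreg] at hedges
  omega

lemma le_phi_induce_compl_singleton_of_two_regular [Finite V] (hG : G.Connected)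
    (hreg : ∀ v, (G.neighborSet v).ncard = 2) (hn : 4 ≤ Nat.card V) (v : V) :
    Nat.card V / 2 + 1 ≤ phi (G.induce {v}ᶜ) := by
  have hcard := card_compl_add_ncard {v}
  rw [Set.ncard_singleton] at hcard
  have := le_phi_of_isTree (isTree_induce_compl_singleton_of_two_regular hG hreg v) (by omega)
  omega

lemma le_phi_cycleGraph {n : ℕ} (hn : 6 ≤ n) : (n + 1) / 2 + 2 ≤ phi (cycleGraph n) := by
  obtain ⟨m, rfl⟩ := Nat.exists_eq_add_of_le' (show 3 ≤ n by omega)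
  have hconn : (cycleGraph (m + 3)).Connected := cycleGraph_connected
  have htree := le_phi_induce_compl_singleton_of_two_regular hconn ncard_neighborSet_cycleGraph
    (by rw [Nat.card_fin]; omega) ⟨0, by omega⟩
  rw [Nat.card_fin] at htree
  obtain ⟨R, hR, h1R, hRz⟩ := exists_isMaxDissoc_one_notMem hn
  by_cases hn6 : m = 3
  · have hgain := phi_induce_compl_singleton_add_ncard_le (A := {R}) _ (by
      rintro _ rfl
      exact ⟨hR, hRz⟩)
    rw [Set.ncard_singleton] at hgain
    omega
  · obtain ⟨S, hS, h1S, hSz⟩ := exists_isMaxDissoc_one_mem (n := m + 3) (by omega)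
    have hRS : R ≠ S := fun h => h1R (h ▸ h1S)
    have hgain := phi_induce_compl_singleton_add_ncard_le (A := {R, S}) _ (by
      rintro _ (rfl | rfl)
      exacts [⟨hR, hRz⟩, ⟨hS, hSz⟩])
    rw [Set.ncard_pair hRS] at hgain
    omega

theorem le_phi_of_two_regular [Finite V] (hG : G.Connected)
    (hreg : ∀ v, (G.neighborSet v).ncard = 2) (hn : 4 ≤ Nat.card V) :
    (Nat.card V + 1) / 2 + 2 ≤ phi G := by
  rcases hn.eq_or_lt with hn4 | hn5
  · have := ncard_edgeSet_of_two_regular hreg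
    have := ncard_edgeSet_le_phi_of_card_le_four hG hn4.ge
    omega
  obtain ⟨n, ⟨e⟩⟩ := exists_iso_cycleGraph hG hreg
  rw [← Nat.card_congr e.toEquiv, Nat.card_fin, ← phi_congr e] at *
  rcases Nat.lt_or_ge 5 (n + 3) with hn6 | hn5
  · exact le_phi_cycleGraph hn6
  · obtain rfl : n = 2 := by omega
    exact five_le_phi_cycleGraph_five

end Cycles

section TwoRegularCore

variable {V : Type*} {G : SimpleGraph V}

lemma IsPendantAt.connected_induce_compl_of_two_regular_core [Finite V] {p v : V}
    (hp : IsPendantAt G p v) (hG : G.Connected) (hn : 3 ≤ Nat.card V)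
    (huniq : ∀ q, IsPendantAt G q v → q = p)
    (hcore : ∀ x, ((G.induce (pendants G)ᶜ).neighborSet x).ncard = 2) :
    (G.induce {p, v}ᶜ).Connected := by
  have hv := hp.notMem_pendants hG hn
  have hpp : p ∈ pendants G := ⟨v, hp⟩
  have hconn := connected_induce_compl_singleton_of_two_regular
    (connected_induce_compl_of_subset_pendants hG hn subset_rfl) hcore ⟨v, hv⟩
  let f : (G.induce (pendants G)ᶜ).induce {⟨v, hv⟩}ᶜ →g G.induce {p, v}ᶜ :=
    { toFun := fun x => ⟨x.1.1, by
        rintro (h | h)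
        exacts [x.1.2 (h ▸ hpp), x.2 (Subtype.ext h)]⟩
      map_rel' := id }
  refine connected_of_dominating hconn f fun x => ?_
  have hxp : x.1 ≠ p := fun h => x.2 (.inl h)
  have hxv : x.1 ≠ v := fun h => x.2 (.inr h)
  by_cases hx : x.1 ∈ pendants G
  · obtain ⟨y, hxy⟩ := id hx
    have hyv : y ≠ v := fun h => hxp (huniq x.1 (h ▸ hxy))
    exact .inr ⟨⟨⟨y, hxy.notMem_pendants hG hn⟩, fun h => hyv (congrArg Subtype.val h)⟩, hxy.adj⟩
  · exact .inl ⟨⟨⟨x, hx⟩, fun h => hxv (congrArg Subtype.val h)⟩, rfl⟩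

lemma IsPendantAt.ncard_neighborSet_of_two_regular_core [Finite V] {p v : V}
    (hp : IsPendantAt G p v) (hG : G.Connected) (hn : 3 ≤ Nat.card V)
    (huniq : ∀ q, IsPendantAt G q v → q = p)
    (hcore : ∀ x, ((G.induce (pendants G)ᶜ).neighborSet x).ncard = 2) :
    (G.neighborSet v).ncard = 3 := by
  have hnbr : G.neighborSet v = insert p (Subtype.val ''
      (G.induce (pendants G)ᶜ).neighborSet ⟨v, hp.notMem_pendants hG hn⟩) := by
    ext x
    constructor
    · intro hvx
      by_cases hx : x ∈ pendants G
      exacts [.inl (huniq x (isPendantAt_of_mem_pendants hx hvx)), .inr ⟨⟨x, hx⟩, hvx, rfl⟩]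
    · rintro (rfl | ⟨y, hvy, rfl⟩)
      exacts [hp.adj.symm, hvy]
  rw [hnbr, Set.ncard_insert_of_notMem, Set.ncard_image_of_injective _ Subtype.val_injective, hcore]
  rintro ⟨y, -, rfl⟩
  exact y.2 ⟨v, hp⟩

lemma le_phi_of_pendant_of_two_regular_core [Finite V] (hG : G.Connected) (hn : 5 ≤ Nat.card V)
    (hE : G.edgeSet.ncard = Nat.card V)
    (hcore : ∀ x, ((G.induce (pendants G)ᶜ).neighborSet x).ncard = 2) {p v : V}
    (hp : IsPendantAt G p v) (huniq : ∀ q, IsPendantAt G q v → q = p) :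
    (Nat.card V + 1) / 2 + 2 ≤ phi G := by
  have hn3 : 3 ≤ Nat.card V := by omega
  have hcard := hp.card_compl_add_two
  have hedges := hp.ncard_edgeSet_induce_compl_add
  have hgain := hp.phi_add_ncard_neighborSet_le
  rw [hp.ncard_neighborSet_of_two_regular_core hG hn3 huniq hcore] at hedges hgain
  have := le_phi_of_isTree (isTree_iff_connected_and_ncard.2
    ⟨hp.connected_induce_compl_of_two_regular_core hG hn3 huniq hcore, by omega⟩) (by omega)
  omega

lemma two_regular_core_of_ncard_edgeSet_eq [Finite V] (hG : G.Connected) (hn : 3 ≤ Nat.card V)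
    (hE : G.edgeSet.ncard = Nat.card V)
    (hcore : ∀ x, 2 ≤ ((G.induce (pendants G)ᶜ).neighborSet x).ncard) (x) :
    ((G.induce (pendants G)ᶜ).neighborSet x).ncard = 2 := by
  have hcard := card_compl_add_ncard (pendants G)
  have hedges := ncard_edgeSet_induce_compl_add_of_subset_pendants hG hn subset_rfl
  exact ncard_neighborSet_eq_two hcore (by omega) x

theorem le_phi_of_two_le_core [Finite V] (hG : G.Connected) (hn : 5 ≤ Nat.card V)
    (hE : G.edgeSet.ncard = Nat.card V)
    (hcore : ∀ x, 2 ≤ ((G.induce (pendants G)ᶜ).neighborSet x).ncard)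
    (huniq : ∀ p q y, IsPendantAt G p y → IsPendantAt G q y → p = q) :
    (Nat.card V + 1) / 2 + 2 ≤ phi G := by
  have hreg := two_regular_core_of_ncard_edgeSet_eq hG (by omega) hE hcore
  rcases (pendants G).eq_empty_or_nonempty with hempty | ⟨p, v, hp⟩
  · rw [hempty, Set.compl_empty] at hreg
    have hreg' : ∀ v, (G.neighborSet v).ncard = 2 := fun v => by
      rw [← hreg ⟨v, trivial⟩, ← Set.ncard_image_of_injective _ Subtype.val_injective]
      congr 1
      ext x
      simp
    exact le_phi_of_two_regular hG hreg' (by omega)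
  · exact le_phi_of_pendant_of_two_regular_core hG hn hE hreg hp
      fun q hq => huniq q p v hq hp

end TwoRegularCore

section UnicyclicBound

variable {V : Type*} {G : SimpleGraph V}

lemma three_le_card_of_card_le_ncard_edgeSet [Finite V] [Nonempty V]
    (hE : Nat.card V ≤ G.edgeSet.ncard) : 3 ≤ Nat.card V := by
  classical
  have := Fintype.ofFinite V
  have hpos : 0 < Nat.card V := Nat.card_pos
  have hle := G.card_edgeFinset_le_card_choose_two
  rw [← Set.ncard_coe_finset, coe_edgeFinset, ← Nat.card_eq_fintype_card] at hle
  replace hle := hE.trans hle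
  by_contra! hlt
  interval_cases Nat.card V <;> simp at hle

lemma IsPendantAt.unicyclic_induce_compl [Finite V] {p y : V} (h : IsPendantAt G p y)
    (hG : G.Connected) (hE : G.edgeSet.ncard = Nat.card V) :
    (G.induce {p}ᶜ).Connected ∧ (G.induce {p}ᶜ).edgeSet.ncard = Nat.card ({p}ᶜ : Set V) ∧
      Nat.card ({p}ᶜ : Set V) + 1 = Nat.card V := by
  have := hG.nonempty
  have hn := three_le_card_of_card_le_ncard_edgeSet hE.ge
  have hsub : {p} ⊆ pendants G := Set.singleton_subset_iff.2 ⟨y, h⟩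
  have hcard := card_compl_add_ncard {p}
  have hedges := ncard_edgeSet_induce_compl_add_of_subset_pendants hG hn hsub
  rw [Set.ncard_singleton] at hcard hedges
  exact ⟨connected_induce_compl_of_subset_pendants hG hn hsub, by omega, hcard⟩

lemma IsPendantPath.unicyclic_induce_compl [Finite V] {u v w : V} (h : IsPendantPath G u v w)
    (hG : G.Connected) (hE : G.edgeSet.ncard = Nat.card V) :
    (G.induce {u, v}ᶜ).Connected ∧
      (G.induce {u, v}ᶜ).edgeSet.ncard = Nat.card ({u, v}ᶜ : Set V) ∧
      Nat.card ({u, v}ᶜ : Set V) + 2 = Nat.card V := by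
  have hcard := h.isPendantAt.card_compl_add_two
  have hedges := h.isPendantAt.ncard_edgeSet_induce_compl_add
  rw [h.ncard_neighborSet] at hedges
  exact ⟨h.connected_induce_compl hG, by omega, hcard⟩

theorem le_phi_of_ncard_edgeSet_eq [Finite V] (hG : G.Connected)
    (hE : G.edgeSet.ncard = Nat.card V) : Nat.card V / 2 + 2 ≤ phi G := by
  induction h : Nat.card V using Nat.strong_induction_on generalizing V with
  | _ n ih =>
    have := hG.nonempty
    have hn := three_le_card_of_card_le_ncard_edgeSet hE.ge
    by_cases hn4 : n ≤ 4
    · have := ncard_edgeSet_le_phi_of_card_le_four hG (h.trans_le hn4)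
      omega
    by_cases huniq : ∀ p q y, IsPendantAt G p y → IsPendantAt G q y → p = q
    swap
    · push Not at huniq
      obtain ⟨p, q, y, hp, hq, hpq⟩ := huniq
      obtain ⟨hconn', hE', hcard'⟩ := hp.unicyclic_induce_compl hG hE
      have := phi_induce_compl_add_one_le_of_twins hpq hp hq
      have := ih _ (by omega) hconn' hE' rfl
      omega
    rcases exists_reduction hG hn with ⟨p, q, y, hpq, hp, hq⟩ | ⟨u, v, w, hpath⟩ | hcore
    · exact absurd (huniq p q y hp hq) hpq
    · obtain ⟨hconn', hE', hcard'⟩ := hpath.unicyclic_induce_compl hG hE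
      have := hpath.phi_add_one_le
      have := ih _ (by omega) hconn' hE' rfl
      omega
    · have := le_phi_of_two_le_core hG (by omega) hE hcore huniq
      omega

end UnicyclicBound

section MatchedOff

variable {V : Type*} {G : SimpleGraph V}

/-- Deleting `c` leaves a perfect matching. -/
def IsMatchedOff (G : SimpleGraph V) (c : V) : Prop := ∀ v, v ≠ c → ∃! u, u ≠ c ∧ G.Adj v u

lemma IsMatchedOff.isDissoc_compl_singleton {c : V} (hc : IsMatchedOff G c) : IsDissoc G {c}ᶜ :=
  fun v hv _ hx _ hy => (hc v hv).unique hx hy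

lemma IsMatchedOff.ncard_edgeSet_induce_compl_singleton [Finite V] {c : V}
    (hc : IsMatchedOff G c) :
    2 * (G.induce {c}ᶜ).edgeSet.ncard = Nat.card ({c}ᶜ : Set V) := by
  have := Fintype.ofFinite V
  have := Fintype.ofFinite ({c}ᶜ : Set V)
  have hreg : ∀ v, ((G.induce {c}ᶜ).neighborSet v).ncard = 1 := fun v => by
    obtain ⟨u, ⟨huc, hvu⟩, huniq⟩ := hc v v.2
    exact Set.ncard_eq_one.2 ⟨⟨u, huc⟩, Set.ext fun z =>
      ⟨fun hz => Subtype.ext (huniq z ⟨z.2, hz⟩), by rintro rfl; exact hvu⟩⟩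
  rw [← sum_ncard_neighborSet, Finset.sum_congr rfl fun v _ => hreg v]
  simp [Nat.card_eq_fintype_card]

lemma IsMatchedOff.two_mul_ncard_neighborSet [Finite V] {c : V} (hc : IsMatchedOff G c)
    (hE : G.edgeSet.ncard = Nat.card V) : 2 * (G.neighborSet c).ncard = Nat.card V + 1 := by
  have hmatch := hc.ncard_edgeSet_induce_compl_singleton
  have hedges := ncard_edgeSet_induce_compl_singleton_add (G := G) c
  have hcard := card_compl_add_ncard {c}
  rw [Set.ncard_singleton] at hcard
  omega

lemma eq_top_of_card_eq_three [Finite V] (hE : G.edgeSet.ncard = Nat.card V)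
    (hn : Nat.card V = 3) : G = ⊤ := by
  classical
  have := Fintype.ofFinite V
  refine edgeFinset_inj.1 (Finset.eq_of_subset_of_card_le (edgeFinset_mono le_top) ?_)
  rw [card_edgeFinset_top_eq_card_choose_two, ← Nat.card_eq_fintype_card, ← Set.ncard_coe_finset,
    coe_edgeFinset, hE, hn]
  decide

lemma isMatchedOff_of_card_eq_three [Finite V] (hE : G.edgeSet.ncard = Nat.card V)
    (hn : Nat.card V = 3) (c : V) : IsMatchedOff G c := by
  obtain rfl := eq_top_of_card_eq_three hE hn
  intro v hv
  obtain ⟨x, hx⟩ : ∃ x, ({c, v}ᶜ : Set V) = {x} := by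
    have := Set.ncard_add_ncard_compl {c, v}
    rw [Set.ncard_pair hv.symm] at this
    exact Set.ncard_eq_one.1 (by omega)
  refine ⟨x, ?_⟩
  simpa [Set.ext_iff, eq_comm (a := v), forall_and, iff_def, and_comm] using hx

lemma IsPendantPath.isMatchedOff {u v : V} {w : ({u, v}ᶜ : Set V)} (h : IsPendantPath G u v w)
    (hw : IsMatchedOff (G.induce {u, v}ᶜ) w) : IsMatchedOff G (w : V) := by
  obtain ⟨w, hwuv⟩ := w
  have hwu : w ≠ u := h.ne.symm
  have hwv : w ≠ v := ((h.adj_iff w).2 (.inr rfl)).ne'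
  intro x hxw
  rcases eq_or_ne x u with rfl | hxu
  · exact ⟨v, ⟨hwv.symm, h.isPendantAt.adj⟩, fun z hz => (h.isPendantAt z).1 hz.2⟩
  rcases eq_or_ne x v with rfl | hxv
  · exact ⟨u, ⟨h.ne, (h.adj_iff u).2 (.inl rfl)⟩,
      fun z hz => ((h.adj_iff z).1 hz.2).resolve_right hz.1⟩
  obtain ⟨y, ⟨hyw, hxy⟩, huniq⟩ := hw ⟨x, by simp [hxu, hxv]⟩ (by simpa using hxw)
  refine ⟨y, ⟨fun hy => hyw (Subtype.ext hy), hxy⟩, fun z ⟨hzw, hxz⟩ => ?_⟩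
  have hzu : z ≠ u := by rintro rfl; exact hxv ((h.isPendantAt x).1 hxz.symm)
  have hzv : z ≠ v := by
    rintro rfl
    exact ((h.adj_iff x).1 hxz.symm).elim hxu hxw
  exact congrArg Subtype.val (huniq ⟨z, by simp [hzu, hzv]⟩ ⟨by simpa using hzw, hxz⟩)

lemma IsPendantPath.isDissoc_union_image {u v : V} {w : ({u, v}ᶜ : Set V)}
    (h : IsPendantPath G u v w) {S : Set ({u, v}ᶜ : Set V)} (hS : IsDissoc (G.induce {u, v}ᶜ) S)
    (hw : w ∉ S) : IsDissoc G ({u, v} ∪ Subtype.val '' S) := by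
  refine (isDissoc_pair u v).union (hS.image (Embedding.induce _)) ?_
  rintro x hx _ ⟨y, hy, rfl⟩ hxy
  obtain ⟨hyu, hyv⟩ : (y : V) ≠ u ∧ (y : V) ≠ v := not_or.1 y.2
  rcases hx with rfl | rfl
  · exact hyv ((h.isPendantAt y).1 hxy)
  · exact hw (Subtype.ext (((h.adj_iff y).1 hxy).resolve_left hyu) ▸ hy)

/- The second gain is a maximal dissociation set containing `u`, `v` and the matching of
`G - {u, v}`, except the partner of `w`: it avoids `w` and `c`, so its trace is not maximal. -/
lemma IsPendantPath.phi_add_two_le [Finite V] {u v : V} {w c a b : ({u, v}ᶜ : Set V)}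
    (h : IsPendantPath G u v w) (hc : IsMatchedOff (G.induce {u, v}ᶜ) c) (hcw : c ≠ w)
    (hab : a ≠ b) (haw : a ≠ w) (hbw : b ≠ w) (hca : (G.induce {u, v}ᶜ).Adj c a)
    (hcb : (G.induce {u, v}ᶜ).Adj c b) : phi (G.induce {u, v}ᶜ) + 2 ≤ phi G := by
  have hvu : G.Adj v u := h.isPendantAt.adj.symm
  have hvw : G.Adj v w := (h.adj_iff w).2 (.inr rfl)
  obtain ⟨R, hR, -, -, huR⟩ := h.isPendantAt.exists_isMaxDissoc_notMem hvw h.ne.symm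
  obtain ⟨Q, hQ, hsub⟩ := (h.isDissoc_union_image
    (S := {c}ᶜ \ {w}) (hc.isDissoc_compl_singleton.mono Set.sdiff_subset)
    fun hw => hw.2 rfl).exists_isMaxDissoc
  have huQ : u ∈ Q := hsub (.inl (.inl rfl))
  have hvQ : v ∈ Q := hsub (.inl (.inr rfl))
  have hwQ : (w : V) ∉ Q := fun hw => not_isDissoc hvQ huQ hw h.ne hvu hvw hQ.1
  have hmemQ : ∀ x ≠ c, x ≠ w → (x : V) ∈ Q := fun x hxc hxw => hsub (.inr ⟨x, ⟨hxc, hxw⟩, rfl⟩)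
  have hcQ : (c : V) ∉ Q := fun hcQ => not_isDissoc hcQ (hmemQ a hca.ne' haw)
    (hmemQ b hcb.ne' hbw) (Subtype.coe_injective.ne hab) hca hcb hQ.1
  have htrace : ¬ IsMaxDissoc (G.induce {u, v}ᶜ) (Subtype.val ⁻¹' Q) := fun hmax =>
    hwQ (hmax.mem (hc.isDissoc_compl_singleton.mono
      (Set.insert_subset hcw.symm fun x hx hxc => hcQ (hxc ▸ hx))))
  rw [← Set.ncard_pair (a := R) (b := Q) fun hRQ => huR (hRQ ▸ huQ)]
  refine h.isPendantAt.phi_add_ncard_le ?_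
  rintro _ (rfl | rfl)
  exacts [⟨hR, fun hu => absurd hu huR⟩, ⟨hQ, fun _ => htrace⟩]

lemma exists_isPendantPath_of_phi_le [Finite V] (hG : G.Connected)
    (hE : G.edgeSet.ncard = Nat.card V) (hn : 5 ≤ Nat.card V) (hodd : Odd (Nat.card V))
    (hphi : phi G ≤ Nat.card V / 2 + 2) : ∃ u v w, IsPendantPath G u v w := by
  rw [Nat.odd_iff] at hodd
  have huniq : ∀ p q y, IsPendantAt G p y → IsPendantAt G q y → p = q := by
    by_contra! ⟨p, q, y, hp, hq, hpq⟩
    obtain ⟨hconn', hE', hcard'⟩ := hp.unicyclic_induce_compl hG hE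
    have := phi_induce_compl_add_one_le_of_twins hpq hp hq
    have := le_phi_of_ncard_edgeSet_eq hconn' hE'
    omega
  rcases exists_reduction hG (by omega) with ⟨p, q, y, hpq, hp, hq⟩ | hpath | hcore
  · exact absurd (huniq p q y hp hq) hpq
  · exact hpath
  · have := le_phi_of_two_le_core hG hn hE hcore huniq
    omega

theorem exists_isMatchedOff [Finite V] (hG : G.Connected) (hE : G.edgeSet.ncard = Nat.card V)
    (hodd : Odd (Nat.card V)) (hphi : phi G ≤ Nat.card V / 2 + 2) : ∃ c, IsMatchedOff G c := by
  induction h : Nat.card V using Nat.strong_induction_on generalizing V with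
  | _ n ih =>
    obtain ⟨r, hr⟩ := hodd
    have := hG.nonempty
    have hn := three_le_card_of_card_le_ncard_edgeSet hE.ge
    rcases hn.eq_or_lt with hn3 | hn3
    · obtain ⟨c⟩ := hG.nonempty
      exact ⟨c, isMatchedOff_of_card_eq_three hE hn3.symm c⟩
    obtain ⟨u, v, w, hpath⟩ :=
      exists_isPendantPath_of_phi_le hG hE (by omega) ⟨r, hr⟩ hphi
    obtain ⟨hG', hE', hcard'⟩ := hpath.unicyclic_induce_compl hG hE
    have hw : w ∈ ({u, v}ᶜ : Set V) := by
      simp [hpath.ne.symm, ((hpath.adj_iff w).2 (.inr rfl)).ne']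
    lift w to ({u, v}ᶜ : Set V) using hw
    have hgain := hpath.phi_add_one_le
    obtain ⟨c, hc⟩ := ih _ (by omega) hG' hE' ⟨r - 1, by omega⟩ (by omega) rfl
    by_cases hcw : c = w
    · exact ⟨w, hpath.isMatchedOff (hcw ▸ hc)⟩
    have : Nonempty ({u, v}ᶜ : Set V) := ⟨w⟩
    rcases (three_le_card_of_card_le_ncard_edgeSet hE'.ge).eq_or_lt with hn3' | hn3'
    · exact ⟨w, hpath.isMatchedOff (isMatchedOff_of_card_eq_three hE' hn3'.symm w)⟩
    have hdeg := hc.two_mul_ncard_neighborSet hE'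
    obtain ⟨a, ⟨hca, haw⟩, b, ⟨hcb, hbw⟩, hab⟩ :
        (((G.induce {u, v}ᶜ).neighborSet c) \ {w}).Nontrivial := by
      have := Set.pred_ncard_le_ncard_sdiff_singleton ((G.induce {u, v}ᶜ).neighborSet c) w
      exact Set.one_lt_ncard_iff_nontrivial.1 (by omega)
    have := hpath.phi_add_two_le hc hcw hab haw hbw hca hcb
    have := le_phi_of_ncard_edgeSet_eq hG' hE'
    omega

end MatchedOff

section UpperBound

variable {V : Type*} {G : SimpleGraph V}

lemma IsMatchedOff.eq_of_notMem {c : V} {S : Set V} (hc : IsMatchedOff G c)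
    (hS : IsMaxDissoc G S) (hcS : c ∉ S) : S = {c}ᶜ :=
  hS.2 _ hc.isDissoc_compl_singleton (Set.subset_compl_singleton_iff.2 hcS)

lemma IsMatchedOff.eq_of_adj_mem {c y : V} {S : Set V} (hc : IsMatchedOff G c)
    (hS : IsMaxDissoc G S) (hcS : c ∈ S) (hyS : y ∈ S) (hcy : G.Adj c y) :
    S = {c, y} ∪ {v | ¬ G.Adj c v ∧ ¬ G.Adj y v} := by
  refine hS.2 _ ((isDissoc_pair c y).union (hc.isDissoc_compl_singleton.mono ?_) ?_)
    fun v hvS => ?_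
  · rintro _ hv rfl
    exact hv.2 hcy.symm
  · rintro x (rfl | rfl) v hv
    exacts [hv.1, hv.2]
  · refine or_iff_not_imp_left.2 fun hv => ?_
    obtain ⟨hvc, hvy⟩ := not_or.1 hv
    exact ⟨fun hcv => not_isDissoc hcS hvS hyS hvy hcv hcy hS.1,
      fun hyv => not_isDissoc hyS hvS hcS hvc hyv hcy.symm hS.1⟩

lemma IsMatchedOff.exists_adj_mem {c a b : V} {S : Set V} (hc : IsMatchedOff G c)
    (hca : G.Adj c a) (hcb : G.Adj c b) (hab : G.Adj a b) (hS : IsMaxDissoc G S) (hcS : c ∈ S) :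
    ∃ y ∈ S, G.Adj c y := by
  by_contra! hno
  have hdissoc : IsDissoc G ({c, a} ∪ S \ {c}) := by
    refine (isDissoc_pair c a).union (hS.1.mono Set.sdiff_subset) ?_
    rintro x (rfl | rfl) t ⟨htS, htc⟩
    · exact hno t htS
    · intro hat
      obtain rfl := (hc x hca.ne').unique ⟨htc, hat⟩ ⟨hcb.ne', hab⟩
      exact hno t htS hcb
  refine hno a (hS.mem (hdissoc.mono ?_)) hca
  rintro x (rfl | hx)
  · exact .inl (.inr rfl)
  · by_cases hxc : x = c
    exacts [.inl (.inl hxc), .inr ⟨hx, hxc⟩]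

lemma IsMatchedOff.phi_le_of_triangle [Finite V] {c a b : V} (hc : IsMatchedOff G c)
    (hca : G.Adj c a) (hcb : G.Adj c b) (hab : G.Adj a b) :
    phi G ≤ (G.neighborSet c).ncard + 1 := by
  let f : V → Set V := fun y => {c, y} ∪ {v | ¬ G.Adj c v ∧ ¬ G.Adj y v}
  have hsub : {S | IsMaxDissoc G S} ⊆ insert {c}ᶜ (f '' G.neighborSet c) := fun S hS => by
    by_cases hcS : c ∈ S
    · obtain ⟨y, hyS, hcy⟩ := hc.exists_adj_mem hca hcb hab hS hcS
      exact .inr ⟨y, hcy, (hc.eq_of_adj_mem hS hcS hyS hcy).symm⟩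
    · exact .inl (hc.eq_of_notMem hS hcS)
  calc phi G ≤ (insert {c}ᶜ (f '' G.neighborSet c)).ncard := Set.ncard_le_ncard hsub
    _ ≤ (f '' G.neighborSet c).ncard + 1 := Set.ncard_insert_le _ _
    _ ≤ (G.neighborSet c).ncard + 1 := Nat.succ_le_succ (Set.ncard_image_le)

/-- `π` sends each vertex other than `c` to the vertex it is matched with in `G - c`; the value
`π c` is arbitrary. -/
structure IsPartner (G : SimpleGraph V) (c : V) (π : V → V) : Prop where
  ne : ∀ v ≠ c, π v ≠ c
  adj_iff : ∀ v ≠ c, ∀ u ≠ c, G.Adj v u ↔ u = π v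

lemma IsMatchedOff.exists_isPartner {c : V} (hc : IsMatchedOff G c) : ∃ π, IsPartner G c π := by
  choose! π hπ huniq using hc
  exact ⟨π, fun v hv => (hπ v hv).1, fun v hv u hu =>
    ⟨fun hvu => huniq v hv u ⟨hu, hvu⟩, fun h => h ▸ (hπ v hv).2⟩⟩

lemma IsPartner.adj {c : V} {π : V → V} (hπ : IsPartner G c π) {v : V} (hv : v ≠ c) :
    G.Adj v (π v) := (hπ.adj_iff v hv _ (hπ.ne v hv)).2 rfl

lemma IsPartner.apply_apply {c : V} {π : V → V} (hπ : IsPartner G c π) {v : V} (hv : v ≠ c) :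
    π (π v) = v := ((hπ.adj_iff _ (hπ.ne v hv) v hv).1 (hπ.adj hv).symm).symm

lemma IsPartner.injOn {c : V} {π : V → V} (hπ : IsPartner G c π) : Set.InjOn π {c}ᶜ :=
  fun v hv u hu h => by rw [← hπ.apply_apply hv, h, hπ.apply_apply hu]

lemma IsPartner.adj_or_adj {c : V} {π : V → V} (hπ : IsPartner G c π) (hG : G.Connected) {v : V}
    (hv : v ≠ c) : G.Adj c v ∨ G.Adj c (π v) := by
  by_contra! ⟨hcv, hcπ⟩
  have hclosed : ∀ x ∈ ({v, π v} : Set V), ∀ y, G.Adj x y → y ∈ ({v, π v} : Set V) := by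
    rintro x (rfl | rfl) y hxy
    · exact .inr ((hπ.adj_iff x hv y fun hyc => hcv (hyc ▸ hxy.symm)).1 hxy)
    · rw [hπ.adj_iff _ (hπ.ne v hv) y fun hyc => hcπ (hyc ▸ hxy.symm), hπ.apply_apply hv] at hxy
      exact .inl hxy
  rcases mem_of_connected hG (.inl rfl) hclosed c with h | h
  exacts [hv h.symm, hπ.ne v hv h.symm]

lemma IsPartner.ncard_adj_and_adj [Finite V] {c : V} {π : V → V} (hπ : IsPartner G c π)
    (hG : G.Connected) (hN : 2 * (G.neighborSet c).ncard = Nat.card V + 1) :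
    {v ∈ G.neighborSet c | G.Adj c (π v)}.ncard = 2 := by
  set N := G.neighborSet c
  have hNc : ∀ v ∈ N, v ≠ c := fun v hv => hv.ne'
  have hunion : N ∪ π '' N = {c}ᶜ := by
    refine (Set.union_subset hNc ?_).antisymm fun v hv => (hπ.adj_or_adj hG hv).imp_right
      fun h => ⟨π v, h, hπ.apply_apply hv⟩
    rintro _ ⟨v, hv, rfl⟩
    exact hπ.ne v (hNc v hv)
  have hinter : N ∩ π '' N = {v ∈ N | G.Adj c (π v)} := by
    ext v
    refine and_congr_right fun hv => ⟨?_, fun h => ⟨π v, h, hπ.apply_apply (hNc v hv)⟩⟩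
    rintro ⟨u, hu, rfl⟩
    rwa [hπ.apply_apply (hNc u hu)]
  have hcard := Set.ncard_union_add_ncard_inter N (π '' N)
  have hcompl := Set.ncard_add_ncard_compl {c}
  rw [hunion, hinter, (hπ.injOn.mono hNc).ncard_image] at hcard
  rw [Set.ncard_singleton] at hcompl
  omega

lemma IsMatchedOff.phi_le_of_ncard_edgeSet_eq [Finite V] {c : V} (hc : IsMatchedOff G c)
    (hG : G.Connected) (hE : G.edgeSet.ncard = Nat.card V) : phi G ≤ (Nat.card V + 1) / 2 + 1 := by
  obtain ⟨π, hπ⟩ := hc.exists_isPartner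
  have hN := hc.two_mul_ncard_neighborSet hE
  obtain ⟨a, hca, hcπa⟩ : {v ∈ G.neighborSet c | G.Adj c (π v)}.Nonempty :=
    Set.nonempty_of_ncard_ne_zero (by rw [hπ.ncard_adj_and_adj hG hN]; exact two_ne_zero)
  have := hc.phi_le_of_triangle hca hcπa (hπ.adj hca.ne')
  omega

end UpperBound

section Isomorphism

variable {V : Type*} {G : SimpleGraph V}

lemma IsMatchedOff.of_iso {W : Type*} {H : SimpleGraph W} (e : H ≃g G) {c : W}
    (hc : IsMatchedOff H c) : IsMatchedOff G (e c) := by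
  intro v hv
  obtain ⟨u, ⟨huc, hvu⟩, huniq⟩ := hc (e.symm v) fun h => hv (by simp [← h])
  rw [← e.map_adj_iff, e.apply_symm_apply] at hvu
  refine ⟨e u, ⟨e.injective.ne huc, hvu⟩, fun x ⟨hxc, hvx⟩ => ?_⟩
  rw [← huniq (e.symm x) ⟨fun h => hxc (by simp [← h]), e.symm.map_adj_iff.2 hvx⟩,
    e.apply_symm_apply]

/-- The partner of a vertex of `graphU k k` in the matching outside of the centre. -/
def graphUPartner (k : ℕ) : Fin 2 ⊕ Fin k ⊕ Fin k → Fin 2 ⊕ Fin k ⊕ Fin k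
  | .inl i => .inl i.rev
  | .inr (.inl i) => .inr (.inr i)
  | .inr (.inr i) => .inr (.inl i)

lemma graphU_adj_inr_inr {k : ℕ} (x y : Fin 2 ⊕ Fin k ⊕ Fin k) :
    (graphU k k le_rfl).Adj (.inr x) (.inr y) ↔ y = graphUPartner k x := by
  rcases x with x | x | x <;> rcases y with y | y | y
  case inl.inl => fin_cases x <;> fin_cases y <;> simp [graphU, graphUPartner, fromRel_adj]
  all_goals simp [graphU, graphUPartner, fromRel_adj, eq_comm]

lemma graphU_adj_inl_inr {k : ℕ} (x : Fin 2 ⊕ Fin k ⊕ Fin k) :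
    (graphU k k le_rfl).Adj (.inl ()) (.inr x) ↔ ∀ l, x ≠ .inr (.inr l) := by
  rcases x with x | x | x
  case inl => fin_cases x <;> simp [graphU, fromRel_adj]
  all_goals simp [graphU, fromRel_adj]

lemma isMatchedOff_graphU (k : ℕ) : IsMatchedOff (graphU k k le_rfl) (.inl ()) := by
  rintro (_ | x) hx
  · exact absurd rfl hx
  refine ⟨.inr (graphUPartner k x), ⟨by simp, (graphU_adj_inr_inr _ _).2 rfl⟩, ?_⟩
  rintro (_ | y) ⟨hy, hxy⟩
  · exact absurd rfl hy
  · rw [(graphU_adj_inr_inr _ _).1 hxy]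

/-- A labelling of the vertices other than `c` by those of `graphU k k` other than its centre,
preserving matched pairs and adjacency to the centre. -/
structure IsLabelling (G : SimpleGraph V) (c : V) (π : V → V) {k : ℕ}
    (g : Fin 2 ⊕ Fin k ⊕ Fin k → V) : Prop where
  injective : Function.Injective g
  ne : ∀ x, g x ≠ c
  partner : ∀ x, g (graphUPartner k x) = π (g x)
  adj_iff : ∀ x, G.Adj c (g x) ↔ ∀ l, x ≠ .inr (.inr l)

lemma IsPartner.isLabelling {c a : V} {π : V → V} (hπ : IsPartner G c π) {k : ℕ} {m : Fin k → V}
    (hca : G.Adj c a) (hcπa : G.Adj c (π a)) (hm : Function.Injective m)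
    (hcm : ∀ i, G.Adj c (m i)) (hcπm : ∀ i, ¬ G.Adj c (π (m i))) :
    IsLabelling G c π (Sum.elim ![a, π a] (Sum.elim m (π ∘ m))) := by
  have hππa : π (π a) = a := hπ.apply_apply hca.ne'
  have hne : a ≠ π a := (hπ.adj hca.ne').ne
  have htriangle : ∀ i, G.Adj c (![a, π a] i) ∧ G.Adj c (π (![a, π a] i)) :=
    Fin.forall_fin_two.2 ⟨⟨hca, hcπa⟩, hcπa, hππa.symm ▸ hca⟩
  refine ⟨Function.Injective.sumElim (fun i j hij => ?_) (hm.sumElim ?_ ?_) ?_, ?_, ?_, ?_⟩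
  · fin_cases i <;> fin_cases j <;> simp_all
  · exact fun i j hij => hm (hπ.injOn (hcm i).ne' (hcm j).ne' hij)
  · exact fun i j (hij : m i = π (m j)) => hcπm j (hij ▸ hcm i)
  · rintro i (j | j) hij
    exacts [hcπm j ((congrArg (G.Adj c <| π ·) hij).mp (htriangle i).2),
      hcπm j ((congrArg (G.Adj c) hij).mp (htriangle i).1)]
  · rintro (i | i | i)
    exacts [(htriangle i).1.ne', (hcm i).ne', hπ.ne _ (hcm i).ne']
  · rintro (i | i | i)
    · fin_cases i
      exacts [rfl, hππa.symm]
    · rfl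
    · exact (hπ.apply_apply (hcm i).ne').symm
  · rintro (i | i | i)
    · exact iff_of_true (htriangle i).1 (by simp)
    · exact iff_of_true (hcm i) (by simp)
    · exact iff_of_false (hcπm i) (by simp)

lemma IsPartner.exists_isLabelling [Finite V] {c : V} {π : V → V} (hπ : IsPartner G c π)
    {k : ℕ} (hN : (G.neighborSet c).ncard = k + 2)
    (hT : {v ∈ G.neighborSet c | G.Adj c (π v)}.ncard = 2) :
    ∃ g : Fin 2 ⊕ Fin k ⊕ Fin k → V, IsLabelling G c π g := by
  set T := {v ∈ G.neighborSet c | G.Adj c (π v)}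
  obtain ⟨a, hca, hcπa⟩ : T.Nonempty := Set.nonempty_of_ncard_ne_zero (by omega)
  have hTN : T ⊆ G.neighborSet c := Set.sep_subset _ _
  have hk : Nat.card ↑(G.neighborSet c \ T) = k := by
    rw [Nat.card_coe_set_eq, Set.ncard_sdiff hTN, hN, hT, Nat.add_sub_cancel]
  let e := (Finite.equivFinOfCardEq hk).symm
  exact ⟨_, hπ.isLabelling hca hcπa (Subtype.val_injective.comp e.injective) (fun i => (e i).2.1)
    fun i h => (e i).2.2 ⟨(e i).2.1, h⟩⟩

lemma IsPartner.nonempty_iso_graphU [Finite V] {c : V} {π : V → V} (hπ : IsPartner G c π)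
    {k : ℕ} {g : Fin 2 ⊕ Fin k ⊕ Fin k → V} (hg : IsLabelling G c π g)
    (hk : Nat.card V = 2 * k + 3) : Nonempty (G ≃g graphU k k le_rfl) := by
  have := Fintype.ofFinite V
  let f : Unit ⊕ Fin 2 ⊕ Fin k ⊕ Fin k → V := Sum.elim (fun _ => c) g
  have hf : Function.Bijective f := by
    rw [Fintype.bijective_iff_injective_and_card, ← Nat.card_eq_fintype_card (α := V), hk]
    refine ⟨(Function.injective_of_subsingleton _).sumElim hg.injective fun _ x => (hg.ne x).symm,
      ?_⟩
    simp only [Fintype.card_sum, Fintype.card_unit, Fintype.card_fin]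
    omega
  have hinl : ∀ x, G.Adj c (g x) ↔ (graphU k k le_rfl).Adj (.inl ()) (.inr x) := fun x =>
    (hg.adj_iff x).trans (graphU_adj_inl_inr x).symm
  have hinr : ∀ x y, G.Adj (g x) (g y) ↔ (graphU k k le_rfl).Adj (.inr x) (.inr y) := fun x y => by
    rw [hπ.adj_iff _ (hg.ne x) _ (hg.ne y), ← hg.partner, hg.injective.eq_iff, graphU_adj_inr_inr]
  have hadj : ∀ x y, G.Adj (f x) (f y) ↔ (graphU k k le_rfl).Adj x y := by
    rintro (_ | x) (_ | y)
    · exact iff_of_false G.irrefl (SimpleGraph.irrefl _)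
    · exact hinl y
    · rw [G.adj_comm, (graphU k k le_rfl).adj_comm]
      exact hinl x
    · exact hinr x y
  exact ⟨RelIso.symm ⟨Equiv.ofBijective f hf, hadj _ _⟩⟩

theorem IsMatchedOff.nonempty_iso_graphU [Finite V] {c : V} (hc : IsMatchedOff G c)
    (hG : G.Connected) (hE : G.edgeSet.ncard = Nat.card V) {k : ℕ}
    (hk : Nat.card V = 2 * k + 3) : Nonempty (G ≃g graphU k k le_rfl) := by
  obtain ⟨π, hπ⟩ := hc.exists_isPartner
  have hN := hc.two_mul_ncard_neighborSet hE
  obtain ⟨g, hg⟩ := hπ.exists_isLabelling (k := k) (by omega) (hπ.ncard_adj_and_adj hG hN)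
  exact hπ.nonempty_iso_graphU hg hk

end Isomorphism

/-- for odd `n ≥ 3`, a unicyclic graph `G` of order `n` satisfies
`phi G = ⌊n/2⌋ + 2` iff `G ≅ U((n-3)/2, (n-3)/2)`. -/
theorem stmt1 {V : Type*} [Fintype V] (G : SimpleGraph V) (n : ℕ) (hn : 3 ≤ n) (hodd : Odd n)
    (hcard : Fintype.card V = n) (hG : IsUnicyclic G) :
    phi G = n / 2 + 2 ↔ Nonempty (G ≃g graphU ((n - 3) / 2) ((n - 3) / 2) le_rfl) := by
  obtain ⟨hconn, hE⟩ := hG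
  rw [← Nat.card_eq_fintype_card] at hcard hE
  subst hcard
  have hmod := Nat.odd_iff.1 hodd
  constructor
  · intro hphi
    obtain ⟨c, hc⟩ := exists_isMatchedOff hconn hE hodd hphi.le
    exact hc.nonempty_iso_graphU hconn hE (by omega)
  · rintro ⟨e⟩
    have hc := (isMatchedOff_graphU _).of_iso e.symm
    have hupper := hc.phi_le_of_ncard_edgeSet_eq hconn hE
    have hlower := le_phi_of_ncard_edgeSet_eq hconn hE
    omega
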